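/- Iterates-norm bound: assume the bounded-data assumption, suppose the step-wise descent property L̂(θ̃^(k+1)) ≤ L̂(θ̃^(k)) − (η/2)‖∇L̂(θ̃^(k))‖² holds for all k ∈ {0, …, K−1}, that the target θ̃ satisfies ‖θ̃ − θ̃^(0)‖² ≥ max{η K L̂(θ̃), η L̂(θ̃^(0))}, and that √H ≥ 36 d √(T d) R³ (3 √d R² (3‖θ̃ − θ̃^(0)‖ + ‖θ̃‖_{2,∞}) + 1) · ‖θ̃ − θ̃^(0)‖². Then for all k ∈ {1, …, K}, ‖θ̃^(k) − θ̃‖ ≤ 3‖θ̃ − θ̃^(0)‖. -/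

import Mathlib

/-!
The proof tracks `‖θᵏ - θ‖²` along gradient descent, writing `D = ‖θ - θ⁰‖`.

*Model.* Along a segment in parameter space each head is a sum over tokens `t` of softmax averages
whose logits and values both move affinely. Its second derivative is explicit and, together with
Cauchy–Schwarz over tokens, yields a remainder
`|Φ(θ + Δ) - Φ(θ) - Φ'(θ)Δ| ≤ 2 √T R³ (3 R² M + 1) ‖Δ‖²` for one head, where `M` bounds the head
norms at both endpoints (`attnPhi_line_expansion`). Summing over heads keeps the factor `1 / √H`
(`mhPhi_line_expansion`). The hypothesis on `H` makes this remainder at most `1` as soon as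
`‖Δ‖ ≤ 3 D`.

*Risk.* The logistic loss `ℓ` is convex and satisfies `|ℓ'| ≤ ℓ`. Hence the tangent inequality for
the risk fails by at most `1 · L̂(θᵏ)`, which gives `⟪∇L̂(θᵏ), θ - θᵏ⟫ ≤ L̂(θ)`
(`empLoss_weak_convex`).

*Recursion.* Expanding the square of one gradient step and using the descent property,
`‖θᵏ⁺¹ - θ‖² ≤ ‖θᵏ - θ‖² + 2 η L̂(θ) + 2 η (L̂(θᵏ) - L̂(θᵏ⁺¹))`. By induction on `k` this telescopes
to `‖θᵏ - θ‖² ≤ D² + 2 η k L̂(θ) + 2 η L̂(θ⁰) ≤ 5 D² ≤ (3 D)²`, which keeps every iterate in the ball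
where the remainder bound applies.
-/

open Finset
open scoped RealInnerProductSpace

/-- The softmax map `φ : ℝ^T → ℝ^T`, `φ(v)_t = exp(v_t) / Σ_s exp(v_s)`. -/
noncomputable def smax {T : ℕ} (v : Fin T → ℝ) : Fin T → ℝ :=
  fun t => Real.exp (v t) / ∑ s, Real.exp (v s)

/-- The softmax logits: the `(t, s)` entry of `X W Xᵀ`, i.e. `xₜᵀ W x_s`. -/
noncomputable def attnScores {T d : ℕ} (X : Fin T → Fin d → ℝ)
    (W : Fin d → Fin d → ℝ) (t : Fin T) : Fin T → ℝ :=
  fun s => ∑ j, ∑ k, X t j * W j k * X s k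

/-- The single-head attention model `Φ(X; U, W) = ⟨U, φ(X W Xᵀ) X⟩`. -/
noncomputable def attnPhi {T d : ℕ} (X U : Fin T → Fin d → ℝ)
    (W : Fin d → Fin d → ℝ) : ℝ :=
  ∑ t, ∑ t', smax (attnScores X W t) t' * ∑ j, U t j * X t' j

/-- Index set for the parameters `θ_h = concat(U_h, W_h) ∈ ℝ^{Td + d²}` of one head. -/
abbrev HeadIx (T d : ℕ) := (Fin T × Fin d) ⊕ (Fin d × Fin d)

/-- Parameter space `ℝ^{H(Td + d²)}` of the `H`-head model, with Euclidean norm. -/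
abbrev Params (T d H : ℕ) := EuclideanSpace ℝ (Fin H × HeadIx T d)

/-- The matrix `U_h` of the `h`-th head. -/
noncomputable def headU {T d H : ℕ} (θ : Params T d H) (h : Fin H) :
    Fin T → Fin d → ℝ := fun t j => θ (h, Sum.inl (t, j))

/-- The matrix `W_h` of the `h`-th head. -/
noncomputable def headW {T d H : ℕ} (θ : Params T d H) (h : Fin H) :
    Fin d → Fin d → ℝ := fun j k => θ (h, Sum.inr (j, k))

/-- The multi-head attention model `Φ̃(X; θ̃) = (1/√H) Σ_h Φ(X; U_h, W_h)`. -/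
noncomputable def mhPhi {T d H : ℕ} (X : Fin T → Fin d → ℝ) (θ : Params T d H) : ℝ :=
  (1 / Real.sqrt H) * ∑ h, attnPhi X (headU θ h) (headW θ h)

/-- The logistic empirical risk `L̂(θ̃) = (1/n) Σᵢ log(1 + exp(−yᵢ Φ̃(Xᵢ; θ̃)))`. -/
noncomputable def empLoss {T d H n : ℕ} (X : Fin n → Fin T → Fin d → ℝ)
    (y : Fin n → ℝ) (θ : Params T d H) : ℝ :=
  (1 / (n : ℝ)) * ∑ i, Real.log (1 + Real.exp (-(y i * mhPhi (X i) θ)))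

/-- `‖θ̃‖_{2,∞} = max_h ‖θ_h‖`: the maximum Euclidean norm over heads. -/
noncomputable def maxHeadNorm {T d H : ℕ} (θ : Params T d H) : ℝ :=
  ⨆ h : Fin H, Real.sqrt (∑ p : HeadIx T d, θ (h, p) ^ 2)

/-- Bounded-data assumption: `R ≥ 1`, labels in `{±1}`, and every token has
Euclidean norm at most `R`. -/
def BoundedData {T d n : ℕ} (X : Fin n → Fin T → Fin d → ℝ)
    (y : Fin n → ℝ) (R : ℝ) : Prop :=
  1 ≤ R ∧ (∀ i, y i = 1 ∨ y i = -1) ∧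
    ∀ i t, Real.sqrt (∑ j, X i t j ^ 2) ≤ R

/-- `β₁(θ̃) = √T R (2R² ‖θ̃‖_{2,∞} + 1)`. -/
noncomputable def beta1 {T d H : ℕ} (R : ℝ) (θ : Params T d H) : ℝ :=
  Real.sqrt T * R * (2 * R ^ 2 * maxHeadNorm θ + 1)

/-- `β₃(θ̃) = 2 d √(T d) R³ (3 √d R² ‖θ̃‖_{2,∞} + 1)`. -/
noncomputable def beta3 {T d H : ℕ} (R : ℝ) (θ : Params T d H) : ℝ :=
  2 * (d : ℝ) * Real.sqrt ((T : ℝ) * d) * R ^ 3 *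
    (3 * Real.sqrt d * R ^ 2 * maxHeadNorm θ + 1)

/-! ### Scalar calculus -/

/-- Second-order Taylor bound on `[0, 1]`. -/
lemma taylor_two_bound {f f' f'' : ℝ → ℝ} {C : ℝ}
    (hf : ∀ x, HasDerivAt f (f' x) x) (hf' : ∀ x, HasDerivAt f' (f'' x) x)
    (hC : ∀ x ∈ Set.Icc (0 : ℝ) 1, |f'' x| ≤ C) :
    |f 1 - f 0 - f' 0| ≤ C / 2 := by
  set r := f 1 - f 0 - f' 0 with hr
  -- Rolle's theorem for the auxiliary function of the Lagrange remainder.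
  have hF : ∀ x, HasDerivAt (fun x => f x + f' x * (1 - x) + r * (1 - x) ^ 2)
      ((f'' x - 2 * r) * (1 - x)) x := by
    intro x
    have h1 : HasDerivAt (fun x : ℝ => 1 - x) (-1) x := by
      simpa using (hasDerivAt_id x).const_sub 1
    refine (((hf x).add ((hf' x).mul h1)).add ((h1.pow 2).const_mul r)).congr_deriv ?_
    push_cast
    ring
  obtain ⟨c, hc, hc0⟩ := exists_hasDerivAt_eq_zero (a := (0 : ℝ)) (b := 1) zero_lt_one
    (fun x _ => (hF x).continuousAt.continuousWithinAt)
    (by simp only [hr]; ring) (fun x _ => hF x)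
  have h1c : 1 - c ≠ 0 := by linarith [hc.2] |> fun h : 0 < 1 - c => h.ne'
  have h2 : f'' c - 2 * r = 0 := (mul_eq_zero.mp hc0).resolve_right h1c
  have h3 := hC c ⟨hc.1.le, hc.2.le⟩
  rw [show f'' c = 2 * r by linarith, abs_mul, abs_two] at h3
  linarith

lemma smax_nonneg {T : ℕ} (v : Fin T → ℝ) (t : Fin T) : 0 ≤ smax v t := by
  unfold smax; positivity

lemma sum_exp_pos {T : ℕ} (t : Fin T) (v : Fin T → ℝ) : 0 < ∑ s, Real.exp (v s) :=
  Finset.sum_pos (fun _ _ => Real.exp_pos _) ⟨t, Finset.mem_univ t⟩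

lemma sum_smax {T : ℕ} (t : Fin T) (v : Fin T → ℝ) : ∑ s, smax v s = 1 := by
  unfold smax
  rw [← Finset.sum_div, div_self (sum_exp_pos t v).ne']

lemma abs_smax_avg_le {T : ℕ} (t : Fin T) (v g : Fin T → ℝ) {C : ℝ} (hg : ∀ s, |g s| ≤ C) :
    |∑ s, smax v s * g s| ≤ C := by
  calc |∑ s, smax v s * g s| ≤ ∑ s, |smax v s * g s| := Finset.abs_sum_le_sum_abs _ _
    _ ≤ ∑ s, smax v s * C := by
        refine Finset.sum_le_sum fun s _ => ?_
        rw [abs_mul, abs_of_nonneg (smax_nonneg v s)]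
        exact mul_le_mul_of_nonneg_left (hg s) (smax_nonneg v s)
    _ = C := by rw [← Finset.sum_mul, sum_smax t, one_mul]

lemma hasDerivAt_smax_line {T : ℕ} (z w : Fin T → ℝ) (s : Fin T) (α : ℝ) :
    HasDerivAt (fun α => smax (fun i => z i + α * w i) s)
      (smax (fun i => z i + α * w i) s *
        (w s - ∑ r, smax (fun i => z i + α * w i) r * w r)) α := by
  have he : ∀ i, HasDerivAt (fun α => Real.exp (z i + α * w i))
      (Real.exp (z i + α * w i) * w i) α := by
    intro i
    have : HasDerivAt (fun α => z i + α * w i) (w i) α := by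
      simpa using ((hasDerivAt_id α).mul_const (w i)).const_add (z i)
    exact this.exp
  have hS : HasDerivAt (fun α => ∑ i, Real.exp (z i + α * w i))
      (∑ i, Real.exp (z i + α * w i) * w i) α :=
    HasDerivAt.fun_sum fun i _ => he i
  have hpos := (sum_exp_pos s (fun i => z i + α * w i)).ne'
  refine ((he s).div hS hpos).congr_deriv ?_
  have : ∑ r, smax (fun i => z i + α * w i) r * w r =
      (∑ i, Real.exp (z i + α * w i) * w i) / ∑ i, Real.exp (z i + α * w i) := by
    rw [Finset.sum_div]
    refine Finset.sum_congr rfl fun r _ => ?_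
    unfold smax; ring
  rw [this]
  unfold smax
  field_simp

/-- First-order expansion of a softmax average along a line: both the logits and the averaged
values move affinely. The second derivative of the `s`-th weight `p` is
`p ((w s - m)² - v)` with `m`, `v` the softmax mean and variance of `w`, hence at most `6 ω² p`. -/
lemma smax_line_expansion {T : ℕ} (t : Fin T) (z w a b : Fin T → ℝ) {ω A B : ℝ}
    (hw : ∀ s, |w s| ≤ ω) (hb : ∀ s, |b s| ≤ B)
    (ha : ∀ α ∈ Set.Icc (0 : ℝ) 1, ∀ s, |a s + α * b s| ≤ A) :
    ∃ D, HasDerivAt (fun α => ∑ s, smax (fun i => z i + α * w i) s * (a s + α * b s)) D 0 ∧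
      |(∑ s, smax (fun i => z i + w i) s * (a s + b s)) - (∑ s, smax z s * a s) - D| ≤
        3 * ω ^ 2 * A + 2 * ω * B := by
  have hω : 0 ≤ ω := (abs_nonneg _).trans (hw t)
  have hB : 0 ≤ B := (abs_nonneg _).trans (hb t)
  set p : ℝ → Fin T → ℝ := fun α => smax (fun i => z i + α * w i) with hp
  set m : ℝ → ℝ := fun α => ∑ r, p α r * w r with hm
  set v : ℝ → ℝ := fun α => ∑ r, p α r * ((w r - m α) * w r) with hv
  have hp' : ∀ s α, HasDerivAt (fun α => p α s) (p α s * (w s - m α)) α :=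
    fun s α => hasDerivAt_smax_line z w s α
  have hm' : ∀ α, HasDerivAt m (v α) α := by
    intro α
    have : HasDerivAt m (∑ r, p α r * (w r - m α) * w r) α :=
      HasDerivAt.fun_sum fun r _ => (hp' r α).mul_const (w r)
    convert this using 1
    exact Finset.sum_congr rfl fun r _ => by ring
  have hl : ∀ s α, HasDerivAt (fun α => a s + α * b s) (b s) α := fun s α => by
    simpa using ((hasDerivAt_id α).mul_const (b s)).const_add (a s)
  have hf : ∀ α, HasDerivAt (fun α => ∑ s, p α s * (a s + α * b s))
      (∑ s, (p α s * (w s - m α) * (a s + α * b s) + p α s * b s)) α :=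
    fun α => HasDerivAt.fun_sum fun s _ => (hp' s α).mul (hl s α)
  have hf' : ∀ α, HasDerivAt
      (fun α => ∑ s, (p α s * (w s - m α) * (a s + α * b s) + p α s * b s))
      (∑ s, p α s * (((w s - m α) ^ 2 - v α) * (a s + α * b s) + 2 * (w s - m α) * b s)) α := by
    intro α
    refine HasDerivAt.fun_sum fun s _ => ?_
    refine ((((hp' s α).mul ((hm' α).const_sub (w s))).mul (hl s α)).add
      ((hp' s α).mul_const (b s))).congr_deriv ?_
    simp only [Pi.mul_apply]
    ring
  have key := taylor_two_bound (C := 6 * ω ^ 2 * A + 4 * ω * B) hf hf' (by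
    intro α hα
    have hmω : |m α| ≤ ω := abs_smax_avg_le t _ _ hw
    have hwm : ∀ s, |w s - m α| ≤ 2 * ω := fun s =>
      (abs_sub _ _).trans (by linarith [hw s])
    have hvω : |v α| ≤ 2 * ω * ω := abs_smax_avg_le t _ _ fun s => by
      rw [abs_mul]; exact mul_le_mul (hwm s) (hw s) (abs_nonneg _) (by linarith)
    refine abs_smax_avg_le t _ _ fun s => (abs_add_le _ _).trans (add_le_add ?_ ?_)
    · rw [abs_mul]
      refine mul_le_mul ((abs_sub _ _).trans ?_) (ha α hα s) (abs_nonneg _) (by positivity)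
      rw [abs_pow]
      nlinarith [hwm s, abs_nonneg (w s - m α)]
    · rw [abs_mul, abs_mul, abs_two]
      have := mul_le_mul (hwm s) (hb s) (abs_nonneg _) (by linarith)
      linarith)
  refine ⟨_, hf 0, ?_⟩
  simp only [hp, zero_mul, one_mul, add_zero] at key ⊢
  linarith

/-! ### Logistic loss -/

/-- Minus the derivative of the logistic loss `u ↦ log (1 + exp (-u))`. -/
noncomputable def logisticSlope (u : ℝ) : ℝ := Real.exp (-u) / (1 + Real.exp (-u))

lemma logisticSlope_nonneg (u : ℝ) : 0 ≤ logisticSlope u := by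
  unfold logisticSlope; positivity

/-- Self-boundedness: the slope of the logistic loss is at most its value. -/
lemma logisticSlope_le (u : ℝ) : logisticSlope u ≤ Real.log (1 + Real.exp (-u)) := by
  have h : (0 : ℝ) < 1 + Real.exp (-u) := by positivity
  refine le_trans (le_of_eq ?_) (Real.one_sub_inv_le_log_of_pos h)
  unfold logisticSlope
  field_simp
  ring

/-- Tangent-line inequality for the convex logistic loss. -/
lemma logistic_tangent (a b : ℝ) :
    Real.log (1 + Real.exp (-a)) - logisticSlope a * (b - a) ≤
      Real.log (1 + Real.exp (-b)) := by
  have ha : (0 : ℝ) < 1 + Real.exp (-a) := by positivity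
  have hb : (0 : ℝ) < 1 + Real.exp (-b) := by positivity
  have h1 : logisticSlope a ≤ 1 := by
    unfold logisticSlope; rw [div_le_one ha]; linarith
  have h := convexOn_exp.2 (Set.mem_univ (a - b)) (Set.mem_univ 0) (logisticSlope_nonneg a)
    (sub_nonneg.2 h1) (by ring)
  simp only [smul_eq_mul, mul_zero, add_zero, Real.exp_zero, mul_one] at h
  have h2 : logisticSlope a * Real.exp (a - b) + (1 - logisticSlope a) =
      (1 + Real.exp (-b)) / (1 + Real.exp (-a)) := by
    have : Real.exp (-b) = Real.exp (-a) * Real.exp (a - b) := by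
      rw [← Real.exp_add]; congr 1; ring
    unfold logisticSlope
    rw [this]
    field_simp
    ring
  rw [h2, ← Real.le_log_iff_exp_le (by positivity), Real.log_div hb.ne' ha.ne'] at h
  linarith

lemma hasDerivAt_logistic (u : ℝ) :
    HasDerivAt (fun u => Real.log (1 + Real.exp (-u))) (-logisticSlope u) u := by
  have h : HasDerivAt (fun u : ℝ => 1 + Real.exp (-u)) (Real.exp (-u) * -1) u :=
    ((hasDerivAt_neg u).exp).const_add 1
  convert h.log (by positivity) using 1
  unfold logisticSlope; ring

/-! ### Second-order expansion of the attention model -/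

lemma abs_sum_mul_le_sqrt {ι : Type*} (s : Finset ι) (f g : ι → ℝ) :
    |∑ i ∈ s, f i * g i| ≤ √(∑ i ∈ s, f i ^ 2) * √(∑ i ∈ s, g i ^ 2) := by
  rw [← Real.sqrt_mul (Finset.sum_nonneg fun _ _ => sq_nonneg _)]
  exact Real.abs_le_sqrt (Finset.sum_mul_sq_le_sq_mul_sq s f g)

lemma abs_attnScores_le {T d : ℕ} {X : Fin T → Fin d → ℝ} {R : ℝ}
    (hX : ∀ t, √(∑ j, X t j ^ 2) ≤ R) (V : Fin d → Fin d → ℝ) (t s : Fin T) :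
    |attnScores X V t s| ≤ R ^ 2 * √(∑ q : Fin d × Fin d, V q.1 q.2 ^ 2) := by
  have hR : 0 ≤ R := (Real.sqrt_nonneg _).trans (hX t)
  have h1 : attnScores X V t s = ∑ q : Fin d × Fin d, (X t q.1 * X s q.2) * V q.1 q.2 := by
    unfold attnScores
    rw [Fintype.sum_prod_type]
    exact Finset.sum_congr rfl fun j _ => Finset.sum_congr rfl fun k _ => by ring
  have h2 : ∑ q : Fin d × Fin d, (X t q.1 * X s q.2) ^ 2 =
      (∑ j, X t j ^ 2) * ∑ k, X s k ^ 2 := by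
    rw [Fintype.sum_prod_type, Finset.sum_mul_sum]
    exact Finset.sum_congr rfl fun j _ => Finset.sum_congr rfl fun k _ => by ring
  rw [h1]
  refine (abs_sum_mul_le_sqrt _ _ _).trans ?_
  refine mul_le_mul_of_nonneg_right ?_ (Real.sqrt_nonneg _)
  rw [h2, Real.sqrt_mul (Finset.sum_nonneg fun _ _ => sq_nonneg _), sq]
  exact mul_le_mul (hX t) (hX s) (Real.sqrt_nonneg _) hR

lemma sum_row_norm_le {T d : ℕ} (P : Fin T → Fin d → ℝ) :
    ∑ t, √(∑ j, P t j ^ 2) ≤ √T * √(∑ q : Fin T × Fin d, P q.1 q.2 ^ 2) := by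
  have h := abs_sum_mul_le_sqrt Finset.univ (fun _ : Fin T => (1 : ℝ))
    (fun t => √(∑ j, P t j ^ 2))
  have h2 : ∀ t, √(∑ j, P t j ^ 2) ^ 2 = ∑ j, P t j ^ 2 := fun t =>
    Real.sq_sqrt (Finset.sum_nonneg fun _ _ => sq_nonneg _)
  simp only [one_mul, one_pow, Finset.sum_const, Finset.card_univ, Fintype.card_fin,
    nsmul_eq_mul, mul_one, h2] at h
  rw [Fintype.sum_prod_type]
  exact (le_abs_self _).trans h

/-- Quadratic remainder bound for a single head, moving from `(U, W)` to `(U + P, W + V)`. -/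
lemma attnPhi_line_expansion {T d : ℕ} {X : Fin T → Fin d → ℝ} {R M p v : ℝ}
    (hR : 1 ≤ R) (hX : ∀ t, √(∑ j, X t j ^ 2) ≤ R)
    (U P : Fin T → Fin d → ℝ) (W V : Fin d → Fin d → ℝ)
    (hU : √(∑ q : Fin T × Fin d, U q.1 q.2 ^ 2) ≤ M)
    (hU' : √(∑ q : Fin T × Fin d, (U q.1 q.2 + P q.1 q.2) ^ 2) ≤ M)
    (hp : √(∑ q : Fin T × Fin d, P q.1 q.2 ^ 2) = p)
    (hv : √(∑ q : Fin d × Fin d, V q.1 q.2 ^ 2) = v) :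
    ∃ D, HasDerivAt (fun α : ℝ => attnPhi X (fun t j => U t j + α * P t j)
        (fun j k => W j k + α * V j k)) D 0 ∧
      |attnPhi X (fun t j => U t j + P t j) (fun j k => W j k + V j k) - attnPhi X U W - D| ≤
        2 * √T * R ^ 3 * (3 * R ^ 2 * M + 1) * (p ^ 2 + v ^ 2) := by
  have hR0 : 0 ≤ R := by linarith
  have hp0 : 0 ≤ p := hp ▸ Real.sqrt_nonneg _
  have hv0 : 0 ≤ v := hv ▸ Real.sqrt_nonneg _
  have hM0 : 0 ≤ M := (Real.sqrt_nonneg _).trans hU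
  set u : Fin T → ℝ := fun t => √(∑ j, U t j ^ 2) with hu
  set u' : Fin T → ℝ := fun t => √(∑ j, (U t j + P t j) ^ 2) with hu'
  set q : Fin T → ℝ := fun t => √(∑ j, P t j ^ 2) with hq
  have hrow : ∀ (r : Fin d → ℝ) s, |∑ j, r j * X s j| ≤ R * √(∑ j, r j ^ 2) := fun r s =>
    (abs_sum_mul_le_sqrt _ _ _).trans (by
      rw [mul_comm]; exact mul_le_mul_of_nonneg_right (hX s) (Real.sqrt_nonneg _))
  have hex := fun t => smax_line_expansion t (attnScores X W t) (attnScores X V t)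
    (fun s => ∑ j, U t j * X s j) (fun s => ∑ j, P t j * X s j)
    (ω := R ^ 2 * v) (A := R * (u t + u' t)) (B := R * q t)
    (fun s => hv ▸ abs_attnScores_le hX V t s) (fun s => hrow (P t) s) (by
      intro α hα s
      -- the values at `α` interpolate between those at `0` and at `1`
      have e : ∑ j, U t j * X s j + α * ∑ j, P t j * X s j =
          (1 - α) * ∑ j, U t j * X s j + α * ∑ j, (U t j + P t j) * X s j := by
        simp only [add_mul, Finset.sum_add_distrib]; ring
      have h1 := hrow (U t) s
      have h2 := hrow (fun j => U t j + P t j) s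
      have hu0 : 0 ≤ R * u t := by positivity
      have hu0' : 0 ≤ R * u' t := by positivity
      rw [e]
      refine (abs_add_le _ _).trans ?_
      rw [abs_mul, abs_mul, abs_of_nonneg hα.1, abs_of_nonneg (sub_nonneg.2 hα.2)]
      have h3 := mul_le_mul_of_nonneg_left h1 (sub_nonneg.2 hα.2)
      have h4 := mul_le_mul_of_nonneg_left h2 hα.1
      have h5 : (1 - α) * (R * u t) ≤ R * u t := by nlinarith [hα.1]
      have h6 : α * (R * u' t) ≤ R * u' t := by nlinarith [hα.2]
      simp only [hu, hu'] at h5 h6 ⊢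
      linarith)
  choose D hD hDb using hex
  have hlineS : ∀ t (α : ℝ), attnScores X (fun j k => W j k + α * V j k) t =
      fun s => attnScores X W t s + α * attnScores X V t s := by
    intro t α; funext s
    simp only [attnScores, Finset.mul_sum, ← Finset.sum_add_distrib]
    exact Finset.sum_congr rfl fun j _ => Finset.sum_congr rfl fun k _ => by ring
  have hlineU : ∀ t s (α : ℝ), ∑ j, (U t j + α * P t j) * X s j =
      ∑ j, U t j * X s j + α * ∑ j, P t j * X s j := by
    intro t s α
    simp only [Finset.mul_sum, ← Finset.sum_add_distrib]
    exact Finset.sum_congr rfl fun j _ => by ring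
  have hline : ∀ α : ℝ, attnPhi X (fun t j => U t j + α * P t j) (fun j k => W j k + α * V j k) =
      ∑ t, ∑ s, smax (fun i => attnScores X W t i + α * attnScores X V t i) s *
        (∑ j, U t j * X s j + α * ∑ j, P t j * X s j) := by
    intro α
    simp only [attnPhi, hlineS, hlineU]
  refine ⟨∑ t, D t, ?_, ?_⟩
  · simp only [hline]
    exact HasDerivAt.fun_sum fun t _ => hD t
  · have h1 := hline 1
    simp only [one_mul] at h1
    rw [h1, attnPhi, ← Finset.sum_sub_distrib, ← Finset.sum_sub_distrib]
    refine (Finset.abs_sum_le_sum_abs _ _).trans ((Finset.sum_le_sum fun t _ => hDb t).trans ?_)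
    have su : ∑ t, u t ≤ √T * M := (sum_row_norm_le U).trans (by gcongr)
    have su' : ∑ t, u' t ≤ √T * M :=
      (sum_row_norm_le (fun t j => U t j + P t j)).trans (by gcongr)
    have sq' : ∑ t, q t ≤ √T * p := hp ▸ sum_row_norm_le P
    have e : ∑ t, (3 * (R ^ 2 * v) ^ 2 * (R * (u t + u' t)) + 2 * (R ^ 2 * v) * (R * q t)) =
        3 * R ^ 5 * v ^ 2 * (∑ t, u t + ∑ t, u' t) + 2 * R ^ 3 * v * ∑ t, q t := by
      simp only [Finset.mul_sum, ← Finset.sum_add_distrib]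
      exact Finset.sum_congr rfl fun t _ => by ring
    rw [e]
    calc _ ≤ 3 * R ^ 5 * v ^ 2 * (√T * M + √T * M) + 2 * R ^ 3 * v * (√T * p) := by gcongr
      _ = √T * R ^ 3 * (6 * R ^ 2 * M * v ^ 2 + 2 * v * p) := by ring
      _ ≤ √T * R ^ 3 * (6 * R ^ 2 * M * (p ^ 2 + v ^ 2) + 2 * (p ^ 2 + v ^ 2)) := by
          refine mul_le_mul_of_nonneg_left (add_le_add ?_ ?_) (by positivity)
          · gcongr
            nlinarith
          · nlinarith [sq_nonneg (p - v)]
      _ = _ := by ring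

/-- Euclidean norm of the parameters of head `h`. -/
noncomputable def headNorm {T d H : ℕ} (θ : Params T d H) (h : Fin H) : ℝ :=
  √(∑ p : HeadIx T d, θ (h, p) ^ 2)

lemma headNorm_le_maxHeadNorm {T d H : ℕ} (θ : Params T d H) (h : Fin H) :
    headNorm θ h ≤ maxHeadNorm θ :=
  le_ciSup (f := fun h => headNorm θ h) (Set.finite_range _).bddAbove h

lemma sum_headNorm_sq {T d H : ℕ} (θ : Params T d H) :
    ∑ h, headNorm θ h ^ 2 = ‖θ‖ ^ 2 := by
  rw [EuclideanSpace.real_norm_sq_eq, Fintype.sum_prod_type]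
  exact Finset.sum_congr rfl fun h _ => Real.sq_sqrt (Finset.sum_nonneg fun _ _ => sq_nonneg _)

lemma headNorm_le_norm {T d H : ℕ} (θ : Params T d H) (h : Fin H) : headNorm θ h ≤ ‖θ‖ := by
  refine abs_le_of_sq_le_sq' ?_ (norm_nonneg _) |>.2
  rw [← sum_headNorm_sq]
  exact Finset.single_le_sum (f := fun h => headNorm θ h ^ 2)
    (fun _ _ => sq_nonneg _) (Finset.mem_univ h)

lemma headNorm_add_le {T d H : ℕ} (θ ψ : Params T d H) (h : Fin H) :
    headNorm (θ + ψ) h ≤ headNorm θ h + headNorm ψ h := by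
  have e : ∀ χ : Params T d H, headNorm χ h =
      ‖(WithLp.toLp 2 (fun p => χ (h, p)) : EuclideanSpace ℝ (HeadIx T d))‖ := by
    intro χ
    rw [EuclideanSpace.norm_eq]
    simp [headNorm]
  rw [e, e, e]
  exact norm_add_le (WithLp.toLp 2 (fun p => θ (h, p)) : EuclideanSpace ℝ (HeadIx T d))
    (WithLp.toLp 2 (fun p => ψ (h, p)))

lemma headNorm_sq_eq {T d H : ℕ} (θ : Params T d H) (h : Fin H) :
    headNorm θ h ^ 2 = √(∑ q : Fin T × Fin d, headU θ h q.1 q.2 ^ 2) ^ 2 +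
      √(∑ q : Fin d × Fin d, headW θ h q.1 q.2 ^ 2) ^ 2 := by
  have hn : ∀ {ι : Type} [Fintype ι] (f : ι → ℝ), 0 ≤ ∑ i, f i ^ 2 := fun f =>
    Finset.sum_nonneg fun _ _ => sq_nonneg _
  rw [headNorm, Real.sq_sqrt (hn _), Real.sq_sqrt (hn _), Real.sq_sqrt (hn _),
    Fintype.sum_sum_type]
  rfl

lemma headU_norm_le {T d H : ℕ} (θ : Params T d H) (h : Fin H) :
    √(∑ q : Fin T × Fin d, headU θ h q.1 q.2 ^ 2) ≤ headNorm θ h := by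
  have h0 : 0 ≤ headNorm θ h := Real.sqrt_nonneg _
  refine abs_le_of_sq_le_sq' ?_ h0 |>.2
  rw [headNorm_sq_eq]
  linarith [sq_nonneg (√(∑ q : Fin d × Fin d, headW θ h q.1 q.2 ^ 2))]

/-- Quadratic remainder bound for the multi-head model: the factor `1 / √H` survives because the
squared displacements of the heads add up to the squared total displacement. -/
lemma mhPhi_line_expansion {T d H : ℕ} {X : Fin T → Fin d → ℝ} {R M : ℝ}
    (hR : 1 ≤ R) (hX : ∀ t, √(∑ j, X t j ^ 2) ≤ R) (θ Δ : Params T d H)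
    (h0 : ∀ h, headNorm θ h ≤ M) (h1 : ∀ h, headNorm (θ + Δ) h ≤ M) :
    ∃ D, HasDerivAt (fun α : ℝ => mhPhi X (θ + α • Δ)) D 0 ∧
      |mhPhi X (θ + Δ) - mhPhi X θ - D| ≤
        1 / √H * (2 * √T * R ^ 3 * (3 * R ^ 2 * M + 1) * ‖Δ‖ ^ 2) := by
  have hex := fun h => attnPhi_line_expansion hR hX (headU θ h) (headU Δ h) (headW θ h)
    (headW Δ h) ((headU_norm_le θ h).trans (h0 h)) ((headU_norm_le (θ + Δ) h).trans (h1 h))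
    rfl rfl
  choose D hD hDb using hex
  refine ⟨1 / √H * ∑ h, D h, ?_, ?_⟩
  · exact (HasDerivAt.fun_sum fun h _ => hD h).const_mul _
  · have e : mhPhi X (θ + Δ) - mhPhi X θ - 1 / √H * ∑ h, D h =
        1 / √H * ∑ h, (attnPhi X (fun t j => headU θ h t j + headU Δ h t j)
          (fun j k => headW θ h j k + headW Δ h j k) -
            attnPhi X (headU θ h) (headW θ h) - D h) := by
      rw [Finset.sum_sub_distrib, Finset.sum_sub_distrib, mul_sub, mul_sub]
      rfl
    rw [e, abs_mul, abs_of_nonneg (by positivity : 0 ≤ 1 / √(H : ℝ)), ← sum_headNorm_sq]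
    refine mul_le_mul_of_nonneg_left ?_ (by positivity)
    refine (Finset.abs_sum_le_sum_abs _ _).trans ((Finset.sum_le_sum fun h _ => hDb h).trans ?_)
    rw [Finset.mul_sum]
    exact Finset.sum_le_sum fun h _ => by rw [headNorm_sq_eq Δ h]

/-! ### The empirical risk -/

lemma differentiable_mhPhi {T d H : ℕ} (X : Fin T → Fin d → ℝ) :
    Differentiable ℝ (mhPhi X : Params T d H → ℝ) := by
  have hs : ∀ (h : Fin H) (t s : Fin T), Differentiable ℝ
      (fun θ : Params T d H => smax (attnScores X (headW θ h) t) s) := by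
    intro h t s
    have hc : ∀ r, Differentiable ℝ
        (fun θ : Params T d H => Real.exp (attnScores X (headW θ h) t r)) := by
      intro r
      unfold attnScores headW
      fun_prop
    unfold smax
    have hne : ∀ θ : Params T d H, ∑ r, Real.exp (attnScores X (headW θ h) t r) ≠ 0 :=
      fun θ => (sum_exp_pos s _).ne'
    simp only [div_eq_mul_inv]
    exact (hc s).mul ((Differentiable.fun_sum fun r _ => hc r).inv hne)
  unfold mhPhi attnPhi headU
  fun_prop

lemma differentiable_empLoss {T d H n : ℕ} (X : Fin n → Fin T → Fin d → ℝ) (y : Fin n → ℝ) :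
    Differentiable ℝ (empLoss X y : Params T d H → ℝ) := by
  have hl : Differentiable ℝ (fun u => Real.log (1 + Real.exp (-u))) :=
    fun u => (hasDerivAt_logistic u).differentiableAt
  have hi : ∀ i, Differentiable ℝ (fun θ : Params T d H =>
      Real.log (1 + Real.exp (-(y i * mhPhi (X i) θ)))) := fun i =>
    hl.comp ((differentiable_mhPhi (X i)).const_mul (y i))
  exact (Differentiable.fun_sum fun i _ => hi i).const_mul _

lemma empLoss_nonneg {T d H n : ℕ} (X : Fin n → Fin T → Fin d → ℝ) (y : Fin n → ℝ)
    (θ : Params T d H) : 0 ≤ empLoss X y θ := by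
  unfold empLoss
  refine mul_nonneg (by positivity) (Finset.sum_nonneg fun i _ => Real.log_nonneg ?_)
  linarith [Real.exp_pos (-(y i * mhPhi (X i) θ))]

/-- Weak convexity of the risk. If every `mhPhi (X i)` is affine up to an error `1` along the
segment, then convexity and self-boundedness of the logistic loss give the tangent inequality
`empLoss (θ + Δ) ≥ empLoss θ + ⟪∇, Δ⟫ - 1 * empLoss θ`, in which the value at `θ` cancels. -/
lemma empLoss_weak_convex {T d H n : ℕ} (X : Fin n → Fin T → Fin d → ℝ) (y : Fin n → ℝ)
    (hy : ∀ i, y i = 1 ∨ y i = -1) (θ Δ : Params T d H)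
    (hex : ∀ i, ∃ D, HasDerivAt (fun α : ℝ => mhPhi (X i) (θ + α • Δ)) D 0 ∧
      |mhPhi (X i) (θ + Δ) - mhPhi (X i) θ - D| ≤ 1) :
    ⟪gradient (empLoss X y) θ, Δ⟫ ≤ empLoss X y (θ + Δ) := by
  choose D hD hDb using hex
  have hline : HasDerivAt (fun α : ℝ => θ + α • Δ) Δ 0 := by
    simpa using ((hasDerivAt_id (0 : ℝ)).smul_const Δ).const_add θ
  have hd1 : HasDerivAt (fun α : ℝ => empLoss X y (θ + α • Δ))
      ⟪gradient (empLoss X y) θ, Δ⟫ 0 := by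
    have hg : HasFDerivAt (empLoss X y)
        (InnerProductSpace.toDual ℝ _ (gradient (empLoss X y) θ)) (θ + (0 : ℝ) • Δ) := by
      rw [zero_smul, add_zero]
      exact (differentiable_empLoss X y θ).hasGradientAt.hasFDerivAt
    exact hg.comp_hasDerivAt (0 : ℝ) hline
  have hd2 : HasDerivAt (fun α : ℝ => empLoss X y (θ + α • Δ))
      (1 / (n : ℝ) * ∑ i, -logisticSlope (y i * mhPhi (X i) θ) * (y i * D i)) 0 := by
    refine HasDerivAt.const_mul _ (HasDerivAt.fun_sum fun i _ => ?_)
    have h := hasDerivAt_logistic (y i * mhPhi (X i) (θ + (0 : ℝ) • Δ))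
    refine (h.comp (0 : ℝ) ((hD i).const_mul (y i))).congr_deriv ?_
    rw [zero_smul, add_zero]
  rw [hd1.unique hd2]
  unfold empLoss
  refine mul_le_mul_of_nonneg_left (Finset.sum_le_sum fun i _ => ?_) (by positivity)
  have ht := logistic_tangent (y i * mhPhi (X i) θ) (y i * mhPhi (X i) (θ + Δ))
  have hs0 := logisticSlope_nonneg (y i * mhPhi (X i) θ)
  have hs := logisticSlope_le (y i * mhPhi (X i) θ)
  have habs := abs_le.1 (hDb i)
  have hy' : y i * (mhPhi (X i) (θ + Δ) - mhPhi (X i) θ - D i) ≤ 1 := by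
    rcases hy i with h | h <;> rw [h] <;> linarith [habs.1, habs.2]
  have := mul_le_mul_of_nonneg_left hy' hs0
  linarith

/-! ### The gradient-descent recursion -/

/-- **Iterates-norm bound.** Under the bounded-data assumption,
suppose the step-wise descent property holds for all `k ∈ {0, …, K−1}`, the target
`θ̃` satisfies `‖θ̃ − θ̃⁰‖² ≥ max{η K L̂(θ̃), η L̂(θ̃⁰)}`, and
`√H ≥ 36 d √(T d) R³ (3 √d R² (3‖θ̃ − θ̃⁰‖ + ‖θ̃‖_{2,∞}) + 1) ‖θ̃ − θ̃⁰‖²`. Then for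
all `k ∈ {1, …, K}`, `‖θ̃^(k) − θ̃‖ ≤ 3‖θ̃ − θ̃⁰‖`. -/
theorem gd_iterates_norm_bound {T d H n : ℕ} (hn : 0 < n)
    (X : Fin n → Fin T → Fin d → ℝ) (y : Fin n → ℝ) (R : ℝ)
    (hdata : BoundedData X y R)
    (η : ℝ) (hη : 0 < η) (K : ℕ) (hK : 1 ≤ K)
    (θseq : ℕ → Params T d H)
    (hstep : ∀ k, θseq (k + 1) = θseq k - η • gradient (empLoss X y) (θseq k))
    (hdescent : ∀ k < K,
      empLoss X y (θseq (k + 1)) ≤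
        empLoss X y (θseq k) - η / 2 * ‖gradient (empLoss X y) (θseq k)‖ ^ 2)
    (θ : Params T d H)
    (htarget : max (η * K * empLoss X y θ) (η * empLoss X y (θseq 0)) ≤
      ‖θ - θseq 0‖ ^ 2)
    (hH : 36 * (d : ℝ) * Real.sqrt ((T : ℝ) * d) * R ^ 3 *
        (3 * Real.sqrt d * R ^ 2 * (3 * ‖θ - θseq 0‖ + maxHeadNorm θ) + 1) *
        ‖θ - θseq 0‖ ^ 2 ≤ Real.sqrt H) :
    ∀ k, 1 ≤ k → k ≤ K → ‖θseq k - θ‖ ≤ 3 * ‖θ - θseq 0‖ := by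
  obtain ⟨hR, hy, hX⟩ := hdata
  set D := ‖θ - θseq 0‖ with hDdef
  have hD0 : 0 ≤ D := norm_nonneg _
  set L := empLoss (T := T) (d := d) (H := H) X y with hL
  have hLn : ∀ ψ, 0 ≤ L ψ := fun ψ => empLoss_nonneg X y ψ
  rcases Nat.eq_zero_or_pos d with hd | hd
  · -- With `d = 0` there are no parameters at all, so all iterates coincide.
    subst hd
    intro k _ _
    have : θseq k - θ = 0 := by
      ext ⟨h, p⟩
      rcases p with p | p <;> exact p.2.elim0
    rw [this, norm_zero]
    positivity
  have hd1 : (1 : ℝ) ≤ d := by exact_mod_cast hd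
  set M := 3 * D + maxHeadNorm θ with hM
  have hmax : 0 ≤ maxHeadNorm θ := Real.iSup_nonneg fun _ => Real.sqrt_nonneg _
  have hM0 : 0 ≤ M := by positivity
  have herr : 1 / √(H : ℝ) * (2 * √(T : ℝ) * R ^ 3 * (3 * R ^ 2 * M + 1) * (3 * D) ^ 2) ≤ 1 := by
    rw [one_div_mul_eq_div]
    refine div_le_one_of_le₀ (le_trans ?_ hH) (Real.sqrt_nonneg _)
    have hsd : 1 ≤ √(d : ℝ) := Real.one_le_sqrt.2 hd1
    have hT : √(T : ℝ) ≤ √((T : ℝ) * d) :=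
      Real.sqrt_le_sqrt (le_mul_of_one_le_right (by positivity) hd1)
    calc 2 * √(T : ℝ) * R ^ 3 * (3 * R ^ 2 * M + 1) * (3 * D) ^ 2
        = 18 * 1 * √(T : ℝ) * R ^ 3 * (3 * 1 * R ^ 2 * M + 1) * D ^ 2 := by ring
      _ ≤ 36 * (d : ℝ) * √((T : ℝ) * d) * R ^ 3 * (3 * √(d : ℝ) * R ^ 2 * M + 1) * D ^ 2 := by
          gcongr
          norm_num
  -- One step of gradient descent from an iterate within distance `3 D` of the target.
  have hone : ∀ k < K, ‖θseq k - θ‖ ≤ 3 * D →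
      ‖θseq (k + 1) - θ‖ ^ 2 ≤
        ‖θseq k - θ‖ ^ 2 + 2 * η * L θ + 2 * η * (L (θseq k) - L (θseq (k + 1))) := by
    intro k hk hball
    have hΔ : ‖θ - θseq k‖ ≤ 3 * D := by rwa [norm_sub_rev]
    have hwc := empLoss_weak_convex X y hy (θseq k) (θ - θseq k) (by
      intro i
      obtain ⟨D', hD', hb⟩ := mhPhi_line_expansion hR (hX i) (θseq k) (θ - θseq k) (M := M)
        (fun h => by
          have h1 := headNorm_add_le θ (θseq k - θ) h
          rw [add_sub_cancel] at h1
          have h2 := headNorm_le_norm (θseq k - θ) h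
          have h3 := headNorm_le_maxHeadNorm θ h
          linarith)
        (fun h => by
          rw [add_sub_cancel]
          have h3 := headNorm_le_maxHeadNorm θ h
          linarith)
      refine ⟨D', hD', hb.trans (le_trans ?_ herr)⟩
      gcongr)
    rw [add_sub_cancel, ← hL] at hwc
    set g := gradient L (θseq k) with hg
    have e : ‖θseq (k + 1) - θ‖ ^ 2 =
        ‖θseq k - θ‖ ^ 2 + 2 * η * ⟪g, θ - θseq k⟫ + η ^ 2 * ‖g‖ ^ 2 := by
      have e1 : θseq (k + 1) - θ = (θseq k - θ) - η • g := by rw [hstep k]; abel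
      have e2 : ⟪g, θ - θseq k⟫ = -⟪θseq k - θ, g⟫ := by
        rw [← neg_sub (θseq k) θ, inner_neg_right, real_inner_comm]
      rw [e1, norm_sub_sq_real, real_inner_smul_right, norm_smul, mul_pow, e2, Real.norm_eq_abs,
        sq_abs]
      ring
    have h1 := mul_le_mul_of_nonneg_left hwc (by positivity : 0 ≤ 2 * η)
    have h2 := mul_le_mul_of_nonneg_left (hdescent k hk) (by positivity : 0 ≤ 2 * η)
    rw [e]
    linarith
  have h1 : η * K * L θ ≤ D ^ 2 := (le_max_left _ _).trans htarget
  have h2 : η * L (θseq 0) ≤ D ^ 2 := (le_max_right _ _).trans htarget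
  have hind : ∀ k ≤ K, ‖θseq k - θ‖ ^ 2 ≤
        D ^ 2 + 2 * η * k * L θ + 2 * η * (L (θseq 0) - L (θseq k)) ∧
      ‖θseq k - θ‖ ≤ 3 * D := by
    -- The telescoped bound is at most `D ^ 2 + 2 * D ^ 2 + 2 * D ^ 2 ≤ (3 * D) ^ 2`.
    have hclose : ∀ k ≤ K, ‖θseq k - θ‖ ^ 2 ≤
        D ^ 2 + 2 * η * k * L θ + 2 * η * (L (θseq 0) - L (θseq k)) →
        ‖θseq k - θ‖ ≤ 3 * D := by
      intro k hk h
      refine abs_le_of_sq_le_sq' ?_ (by positivity) |>.2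
      have hkK : (k : ℝ) ≤ K := by exact_mod_cast hk
      have h3 : η * k * L θ ≤ η * K * L θ := by
        have := hLn θ
        gcongr
      have h4 : 0 ≤ η * L (θseq k) := mul_nonneg hη.le (hLn _)
      nlinarith
    intro k
    induction k with
    | zero =>
      intro _
      have : ‖θseq 0 - θ‖ = D := norm_sub_rev _ _
      rw [this]
      exact ⟨by simp, by linarith⟩
    | succ k ih =>
      intro hk
      obtain ⟨ih1, ih2⟩ := ih (by lia)
      have h3 := hone k (by lia) ih2
      have h4 : ‖θseq (k + 1) - θ‖ ^ 2 ≤ D ^ 2 + 2 * η * ((k + 1 : ℕ) : ℝ) * L θ +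
          2 * η * (L (θseq 0) - L (θseq (k + 1))) := by
        push_cast
        linarith
      exact ⟨h4, hclose _ hk h4⟩
  exact fun k _ hk => (hind k hk).2
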